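/- arXiv:2105.00018 — 2 statements merged into one kernel-verified Lean document; each statement's English description precedes it below -/
import Mathlib

section
/- Let μ be the pushforward of ν under x ↦ log(1 + e^x), i.e. the invariant measure of the chain Ỹ_{n+1} = log(1 + exp(𝚣_{n+1} + Ỹ_n)), and let μ̂(u) := ∫ e^{−ux} μ(dx) be its Laplace transform, finite for Re u large. Then μ̂(u) is finite exactly for Re u > 0, and there exist m_ζ > 0, c_ζ ∈ ℝ, ρ ∈ (0,1] and a function H analytic on {u ∈ ℂ : Re u > −ρ} such that μ̂(u) = m_ζ/u + c_ζ + u H(u) for Re u > 0; in particular μ̂ extends meromorphically to {Re u > −ρ} with a simple pole at u = 0 as its only singularity there. -/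
open MeasureTheory ProbabilityTheory Real Filter Set
open scoped ENNReal

noncomputable def hkfun (k x : ℝ) : ℝ :=
  Real.log ((Real.exp (-k) + Real.exp x) / (1 + Real.exp (x - k)))

noncomputable def hY (y : ℝ) : ℝ := y + Real.log (1 + Real.exp (-y))

/-- A σ-finite measure ν is invariant for the chain Y_{n+1} = z_{n+1} + hY (Y_n),
where the increments have density ζ. -/
def IsInvariantY (ζ : ℝ → ℝ) (ν : Measure ℝ) : Prop :=
  ∀ g : ℝ → ℝ≥0∞, Measurable g →
    ∫⁻ z, g z ∂ν = ∫⁻ y, ∫⁻ z, g (z + hY y) * ENNReal.ofReal (ζ z) ∂volume ∂ν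

/-!
Let `P` be the law of `𝚣`, `φ u = E[e^{-u𝚣}]`, `h = hY` and `μ = h_* ν`, so that invariance reads
`μ ∗ P = ν`.

*Finiteness.* Since `E[𝚣] = 0` and `𝚣` is not degenerate, `φ > 1` on the real axis away from `0`,
while `h y - y → 0` at `+∞`. Hence `e^{-uy}` has strictly positive drift far to the right, and
integrating the drift of a bounded truncation of it against `ν` bounds the mass of `e^{-uh}` on
`(R, ∞)` by `ν (-∞, R]`.

*Pole.* Transforming `μ ∗ P = ν` gives `(φ - 1) μ̂ = G` with
`G u = ∫ (e^{-uy} - e^{-u h(y)}) ν(dy)`. Because `h y - y ≤ e^{-y}`, the function `G` is analytic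
in a strip around the imaginary axis, with `G 0 = 0` and `G' 0 = ∫ (h y - y) ν(dy) > 0`. The
function `φ - 1` has a double zero at `0` with `φ'' 0 = E[𝚣²]`, and by the Riemann-Lebesgue lemma
no other zero in a narrow enough strip. So `μ̂ = G / (φ - 1)` has exactly one pole there, simple
and with residue `2 ∫ (h y - y) ν(dy) / E[𝚣²]`. A pole is impossible for a finite measure on
`[0, ∞)`, so `μ` has infinite mass and `μ̂` diverges for `Re u ≤ 0`.
-/

open scoped Topology

theorem hY_eq_log_one_add_exp (y : ℝ) : hY y = log (1 + exp y) := by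
  have hfactor : 1 + exp y = exp y * (1 + exp (-y)) := by
    rw [mul_add, ← exp_add, add_neg_cancel, exp_zero, mul_one, add_comm]
  rw [hY, hfactor, log_mul (by positivity) (by positivity), log_exp]

theorem exp_hY (y : ℝ) : exp (hY y) = 1 + exp y := by
  rw [hY_eq_log_one_add_exp, exp_log (by positivity)]

theorem hY_pos (y : ℝ) : 0 < hY y := by
  rw [hY_eq_log_one_add_exp]
  exact log_pos (by linarith [exp_pos y])

theorem lt_hY (y : ℝ) : y < hY y := by
  rw [← exp_lt_exp, exp_hY]
  linarith

theorem hY_sub_le_exp_neg (y : ℝ) : hY y - y ≤ exp (-y) := by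
  have := log_le_sub_one_of_pos (x := 1 + exp (-y)) (by positivity)
  rw [hY]
  linarith

theorem hY_le_exp (y : ℝ) : hY y ≤ exp y := by
  have := log_le_sub_one_of_pos (x := 1 + exp y) (by positivity)
  rw [hY_eq_log_one_add_exp]
  linarith

@[fun_prop]
theorem continuous_hY : Continuous hY := by
  rw [funext hY_eq_log_one_add_exp]
  exact Continuous.log (by fun_prop) fun y ↦ by positivity

@[fun_prop]
theorem measurable_hY : Measurable hY :=
  continuous_hY.measurable

theorem tendsto_hY_sub_atTop : Tendsto (fun y ↦ hY y - y) atTop (𝓝 0) :=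
  squeeze_zero (fun y ↦ (sub_pos.2 (lt_hY y)).le) hY_sub_le_exp_neg
    (tendsto_exp_atBot.comp tendsto_neg_atTop_atBot)

/-- The Laplace transform `u ↦ ∫ e^{-ux} μ(dx)` of a measure on `ℝ`, with the junk value `0` where
the integral diverges. -/
noncomputable def laplaceTransform (μ : Measure ℝ) (u : ℂ) : ℂ :=
  ∫ x : ℝ, Complex.exp (-(u * x)) ∂μ

/-- A law on `ℝ` is strongly nonlattice if, away from the origin, its characteristic function stays
at a positive distance from `1`. -/
def StronglyNonlattice (P : Measure ℝ) : Prop :=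
  ∀ r > 0, ∃ η > 0, ∀ t : ℝ, r ≤ |t| → η ≤ ‖charFun P t - 1‖

section LaplaceTransform

variable {μ P : Measure ℝ} {s : ℝ} {u : ℂ}

theorem norm_cexp_neg_mul_ofReal (u : ℂ) (x : ℝ) :
    ‖Complex.exp (-(u * x))‖ = exp (-(u.re * x)) := by
  simp [Complex.norm_exp]

theorem laplaceTransform_zero [IsProbabilityMeasure P] : laplaceTransform P 0 = 1 := by
  simp [laplaceTransform]

theorem laplaceTransform_ofReal (μ : Measure ℝ) (x : ℝ) :
    laplaceTransform μ x = ((∫ z, exp (-(x * z)) ∂μ : ℝ) : ℂ) := by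
  rw [laplaceTransform, ← integral_complex_ofReal]
  push_cast
  rfl

theorem laplaceTransform_eq_complexMGF (μ : Measure ℝ) (u : ℂ) :
    laplaceTransform μ u = complexMGF id μ (-u) := by
  simp [laplaceTransform, complexMGF]

theorem laplaceTransform_mul_I (μ : Measure ℝ) (t : ℝ) :
    laplaceTransform μ (t * Complex.I) = charFun μ (-t) := by
  rw [laplaceTransform_eq_complexMGF, ← complexMGF_id_mul_I]
  push_cast
  ring_nf

theorem integrable_cexp_neg_mul (h : Integrable (fun x ↦ exp (-(u.re * x))) μ) :
    Integrable (fun x : ℝ ↦ Complex.exp (-(u * x))) μ :=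
  h.mono' (by fun_prop) (ae_of_all _ fun x ↦ (norm_cexp_neg_mul_ofReal u x).le)

theorem isOpen_setOf_abs_re_lt (s : ℝ) : IsOpen {u : ℂ | |u.re| < s} :=
  isOpen_lt (by fun_prop) continuous_const

theorem setOf_abs_re_lt_mem_nhds_zero (hs : 0 < s) : {u : ℂ | |u.re| < s} ∈ 𝓝 0 :=
  (isOpen_setOf_abs_re_lt s).mem_nhds (by simpa using hs)

theorem integrable_exp_neg_mul_conv {a : ℝ}
    (hμ : Integrable (fun x ↦ exp (-(a * x))) μ) (hP : Integrable (fun z ↦ exp (-(a * z))) P) :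
    Integrable (fun x ↦ exp (-(a * x))) (μ ∗ P) := by
  rw [Measure.conv, integrable_map_measure (by fun_prop) (by fun_prop)]
  refine (hμ.mul_prod hP).congr (ae_of_all _ fun p ↦ ?_)
  simp only [Function.comp_apply, ← exp_add]
  ring_nf

theorem laplaceTransform_conv [SFinite μ] [SFinite P]
    (hμ : Integrable (fun x ↦ exp (-(u.re * x))) μ)
    (hP : Integrable (fun z ↦ exp (-(u.re * z))) P) :
    laplaceTransform (μ ∗ P) u = laplaceTransform μ u * laplaceTransform P u := by
  simp only [laplaceTransform]
  rw [integral_conv (integrable_cexp_neg_mul (integrable_exp_neg_mul_conv hμ hP)),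
    ← integral_mul_const]
  simp only [← integral_const_mul, ← Complex.exp_add]
  push_cast
  ring_nf

theorem differentiableOn_laplaceTransform :
    DifferentiableOn ℂ (laplaceTransform μ) {u | -u.re ∈ interior (integrableExpSet id μ)} := by
  rw [funext (laplaceTransform_eq_complexMGF μ)]
  exact differentiableOn_complexMGF.comp (differentiableOn_neg _) fun u hu ↦ hu

theorem differentiableOn_laplaceTransform_of_integrable_exp_neg_mul
    (h : ∀ x > 0, Integrable (fun y ↦ exp (-(x * y))) μ) :
    DifferentiableOn ℂ (laplaceTransform μ) {u | 0 < u.re} := by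
  refine differentiableOn_laplaceTransform.mono fun u hu ↦ mem_interior.2
    ⟨Iio 0, fun t ht ↦ ?_, isOpen_Iio, by simpa using hu⟩
  simpa [integrableExpSet] using h (-t) (by simpa using ht)

end LaplaceTransform

section ExponentialMoments

variable {P : Measure ℝ} {s : ℝ}

theorem integrable_exp_mul_abs_mono {t : ℝ} (hexp : Integrable (fun z ↦ exp (s * |z|)) P)
    (ht : t ≤ s) : Integrable (fun z ↦ exp (t * |z|)) P :=
  hexp.mono' (by fun_prop) (ae_of_all _ fun z ↦ by
    rw [norm_of_nonneg (exp_pos _).le]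
    gcongr)

theorem integrable_exp_mul_of_integrable_exp_mul_abs {t : ℝ}
    (hexp : Integrable (fun z ↦ exp (s * |z|)) P) (ht : |t| ≤ s) :
    Integrable (fun z ↦ exp (t * z)) P := by
  refine hexp.mono' (by fun_prop) (ae_of_all _ fun z ↦ ?_)
  rw [norm_of_nonneg (exp_pos _).le, exp_le_exp]
  calc t * z ≤ |t| * |z| := (le_abs_self _).trans (abs_mul _ _).le
    _ ≤ s * |z| := by gcongr

theorem integrable_exp_neg_mul_of_integrable_exp_mul_abs {t : ℝ}
    (hexp : Integrable (fun z ↦ exp (s * |z|)) P) (ht : |t| ≤ s) :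
    Integrable (fun z ↦ exp (-(t * z))) P := by
  simpa only [neg_mul] using
    integrable_exp_mul_of_integrable_exp_mul_abs hexp (t := -t) (by rwa [abs_neg])

theorem mem_interior_integrableExpSet_of_integrable_exp_mul_abs {t : ℝ}
    (hexp : Integrable (fun z ↦ exp (s * |z|)) P) (ht : |t| < s) :
    t ∈ interior (integrableExpSet id P) :=
  mem_interior.2 ⟨Ioo (-s) s, fun _ hx ↦ integrable_exp_mul_of_integrable_exp_mul_abs hexp
    (abs_le.2 ⟨hx.1.le, hx.2.le⟩), isOpen_Ioo, abs_lt.1 ht⟩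

theorem integrable_pow_of_integrable_exp_mul_abs (hs : 0 < s)
    (hexp : Integrable (fun z ↦ exp (s * |z|)) P) (n : ℕ) : Integrable (fun z ↦ z ^ n) P :=
  integrable_pow_of_mem_interior_integrableExpSet (X := id)
    (mem_interior_integrableExpSet_of_integrable_exp_mul_abs hexp (by simpa using hs)) n

theorem differentiableOn_laplaceTransform_of_integrable_exp_mul_abs
    (hexp : Integrable (fun z ↦ exp (s * |z|)) P) :
    DifferentiableOn ℂ (laplaceTransform P) {u | |u.re| < s} :=
  differentiableOn_laplaceTransform.mono fun u hu ↦
    mem_interior_integrableExpSet_of_integrable_exp_mul_abs hexp (by simpa using hu)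

end ExponentialMoments

section DoubleZero

theorem exists_differentiableOn_eq_add_mul_deriv_add_sq_mul {f : ℂ → ℂ} {s : Set ℂ} {c : ℂ}
    (hs : s ∈ 𝓝 c) (hf : DifferentiableOn ℂ f s) :
    ∃ g : ℂ → ℂ, DifferentiableOn ℂ g s ∧
      ∀ u, f u = f c + (u - c) * deriv f c + (u - c) ^ 2 * g u := by
  refine ⟨dslope (dslope f c) c, (Complex.differentiableOn_dslope hs).2
    ((Complex.differentiableOn_dslope hs).2 hf), fun u ↦ ?_⟩
  have hfirst := sub_smul_dslope f c u
  have hsecond := sub_smul_dslope (dslope f c) c u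
  rw [dslope_same] at hsecond
  simp only [smul_eq_mul] at hfirst hsecond
  linear_combination -hfirst - (u - c) * hsecond

theorem iteratedDeriv_two_of_eq_add_mul_add_sq_mul {f g : ℂ → ℂ} {a b c : ℂ}
    (hg : AnalyticAt ℂ g c) (hf : ∀ u, f u = a + (u - c) * b + (u - c) ^ 2 * g u) :
    iteratedDeriv 2 f c = 2 * g c := by
  have hderiv : deriv f =ᶠ[𝓝 c] fun u ↦ b + (2 * (u - c) * g u + (u - c) ^ 2 * deriv g u) := by
    filter_upwards [hg.eventually_analyticAt] with u hu
    have hsub : HasDerivAt (fun u ↦ u - c) 1 u := (hasDerivAt_id u).sub_const c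
    have := ((hsub.mul_const b).const_add a).add
      ((hsub.pow 2).mul hu.differentiableAt.hasDerivAt)
    have hf' : f = (fun u ↦ a + (u - c) * b) + (fun u ↦ u - c) ^ 2 * g := funext hf
    rw [hf', this.deriv]
    simp
  have hsub : HasDerivAt (fun u ↦ u - c) 1 c := (hasDerivAt_id c).sub_const c
  have := (((hsub.const_mul 2).mul hg.differentiableAt.hasDerivAt).add
    ((hsub.pow 2).mul hg.deriv.differentiableAt.hasDerivAt)).const_add b
  rw [iteratedDeriv_succ, iteratedDeriv_one, hderiv.deriv_eq]
  simpa using this.deriv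

variable {P : Measure ℝ} {s : ℝ}

theorem iteratedDeriv_laplaceTransform_zero (hs : 0 < s)
    (hexp : Integrable (fun z ↦ exp (s * |z|)) P) (n : ℕ) :
    iteratedDeriv n (laplaceTransform P) 0 = (-1) ^ n * ((∫ z, z ^ n ∂P : ℝ) : ℂ) := by
  rw [funext (laplaceTransform_eq_complexMGF P), iteratedDeriv_comp_neg,
    iteratedDeriv_complexMGF (mem_interior_integrableExpSet_of_integrable_exp_mul_abs hexp
      (by simpa using hs)), ← integral_complex_ofReal]
  simp

theorem StronglyNonlattice.not_ae_eq_zero [IsProbabilityMeasure P] (hP : StronglyNonlattice P) :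
    ¬∀ᵐ z ∂P, z = 0 := by
  intro hae
  have hchar : charFun P 1 = 1 := by
    rw [charFun_apply_real, integral_congr_ae (g := fun _ ↦ 1)
      (hae.mono fun z hz ↦ by simp [hz])]
    simp
  obtain ⟨η, hη, hle⟩ := hP 1 one_pos
  exact (hle 1 (by simp)).not_gt (by simpa [hchar] using hη)

theorem integral_sq_pos_of_not_ae_eq_zero (hP : ¬∀ᵐ z ∂P, z = 0)
    (hsq : Integrable (fun z ↦ z ^ 2) P) : 0 < ∫ z, z ^ 2 ∂P := by
  refine (integral_nonneg fun z ↦ sq_nonneg z).lt_of_ne' fun hzero ↦ hP ?_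
  filter_upwards [(integral_eq_zero_iff_of_nonneg (fun z ↦ sq_nonneg z) hsq).1 hzero] with z hz
  exact pow_eq_zero_iff two_ne_zero |>.1 hz

theorem exists_laplaceTransform_eq_one_add_sq_mul [IsProbabilityMeasure P] (hs : 0 < s)
    (hexp : Integrable (fun z ↦ exp (s * |z|)) P) (hmean : ∫ z, z ∂P = 0) :
    ∃ Z : ℂ → ℂ, DifferentiableOn ℂ Z {u | |u.re| < s} ∧
      (∀ u, laplaceTransform P u = 1 + u ^ 2 * Z u) ∧ Z 0 = ((∫ z, z ^ 2 ∂P) / 2 : ℝ) := by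
  obtain ⟨Z, hZ, htaylor⟩ := exists_differentiableOn_eq_add_mul_deriv_add_sq_mul
    (setOf_abs_re_lt_mem_nhds_zero hs)
    (differentiableOn_laplaceTransform_of_integrable_exp_mul_abs hexp)
  have hfirst : deriv (laplaceTransform P) 0 = 0 := by
    simpa [hmean] using iteratedDeriv_laplaceTransform_zero hs hexp 1
  have hsecond := iteratedDeriv_two_of_eq_add_mul_add_sq_mul
    (hZ.analyticAt (setOf_abs_re_lt_mem_nhds_zero hs)) htaylor
  rw [iteratedDeriv_laplaceTransform_zero hs hexp] at hsecond
  refine ⟨Z, hZ, fun u ↦ by simpa [laplaceTransform_zero, hfirst] using htaylor u, ?_⟩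
  push_cast
  linear_combination -hsecond / 2

end DoubleZero

section ZeroFreeStrip

variable {P : Measure ℝ} {s : ℝ}

theorem norm_cexp_neg_mul_sub_le (hs : 0 < s) {u : ℂ} (hu : |u.re| ≤ s / 2) (z : ℝ) :
    ‖Complex.exp (-(u * z)) - Complex.exp (-(u.im * Complex.I * z))‖ ≤
      |u.re| * (2 / s) * exp (s * |z|) := by
  have hsplit : Complex.exp (-(u * z)) - Complex.exp (-(u.im * Complex.I * z)) =
      Complex.exp (-(u.im * Complex.I * z)) * (Complex.exp ((-(u.re * z) : ℝ) : ℂ) - 1) := by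
    rw [mul_sub, ← Complex.exp_add, mul_one]
    congr 2
    conv_lhs => rw [← Complex.re_add_im u]
    push_cast
    ring
  have hexp : ‖Complex.exp ((-(u.re * z) : ℝ) : ℂ) - 1‖ ≤ |u.re| * |z| * exp (|u.re| * |z|) := by
    simpa [abs_mul] using Complex.norm_exp_sub_sum_le_norm_mul_exp ((-(u.re * z) : ℝ) : ℂ) 1
  have habs : |z| ≤ 2 / s * exp (s / 2 * |z|) := by
    rw [div_mul_eq_mul_div, le_div_iff₀ hs]
    linarith [add_one_le_exp (s / 2 * |z|)]
  calc ‖Complex.exp (-(u * z)) - Complex.exp (-(u.im * Complex.I * z))‖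
      = ‖Complex.exp ((-(u.re * z) : ℝ) : ℂ) - 1‖ := by
        rw [hsplit, norm_mul, norm_cexp_neg_mul_ofReal]
        simp
    _ ≤ |u.re| * (2 / s * exp (s / 2 * |z|)) * exp (s / 2 * |z|) := by
        refine hexp.trans ?_
        gcongr
    _ = |u.re| * (2 / s) * (exp (s / 2 * |z|) * exp (s / 2 * |z|)) := by ring
    _ = |u.re| * (2 / s) * exp (s * |z|) := by
        rw [← exp_add]
        ring_nf

theorem integrable_cexp_neg_mul_of_integrable_exp_mul_abs
    (hexp : Integrable (fun z ↦ exp (s * |z|)) P) {u : ℂ} (hu : |u.re| ≤ s) :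
    Integrable (fun z : ℝ ↦ Complex.exp (-(u * z))) P :=
  integrable_cexp_neg_mul (integrable_exp_neg_mul_of_integrable_exp_mul_abs hexp hu)

theorem norm_laplaceTransform_sub_laplaceTransform_im_le (hs : 0 < s)
    (hexp : Integrable (fun z ↦ exp (s * |z|)) P) {u : ℂ} (hu : |u.re| ≤ s / 2) :
    ‖laplaceTransform P u - laplaceTransform P (u.im * Complex.I)‖ ≤
      |u.re| * (2 / s) * ∫ z, exp (s * |z|) ∂P := by
  rw [laplaceTransform, laplaceTransform, ← integral_const_mul, ← integral_sub
    (integrable_cexp_neg_mul_of_integrable_exp_mul_abs hexp (hu.trans (by linarith)))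
    (integrable_cexp_neg_mul_of_integrable_exp_mul_abs hexp (by simpa using hs.le))]
  exact norm_integral_le_of_norm_le (hexp.const_mul _)
    (ae_of_all _ (norm_cexp_neg_mul_sub_le hs hu))

theorem StronglyNonlattice.exists_laplaceTransform_ne_one (hP : StronglyNonlattice P) (hs : 0 < s)
    (hexp : Integrable (fun z ↦ exp (s * |z|)) P) {r : ℝ} (hr : 0 < r) :
    ∃ ε > 0, ∀ u : ℂ, |u.re| < ε → r ≤ |u.im| → laplaceTransform P u ≠ 1 := by
  obtain ⟨η, hη, hfar⟩ := hP r hr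
  have hsmall : Tendsto (fun x : ℝ ↦ |x| * (2 / s) * ∫ z, exp (s * |z|) ∂P) (𝓝 0) (𝓝 0) := by
    have hcont : Continuous fun x : ℝ ↦ |x| * (2 / s) * ∫ z, exp (s * |z|) ∂P := by fun_prop
    simpa using hcont.tendsto 0
  obtain ⟨ε, hε, hnear⟩ := Metric.eventually_nhds_iff.1
    ((hsmall.eventually_lt_const hη).and (Metric.ball_mem_nhds 0 (half_pos hs)))
  refine ⟨ε, hε, fun u hre him hone ↦ ?_⟩
  obtain ⟨hlt, hball⟩ := hnear (y := u.re) (by simpa using hre)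
  have hclose := norm_laplaceTransform_sub_laplaceTransform_im_le hs hexp (u := u)
    (by simpa using (mem_ball_zero_iff.1 hball).le)
  rw [hone, norm_sub_rev, laplaceTransform_mul_I] at hclose
  linarith [hfar (-u.im) (by rwa [abs_neg])]

theorem StronglyNonlattice.exists_strip_ne_zero (hP : StronglyNonlattice P) (hs : 0 < s)
    (hexp : Integrable (fun z ↦ exp (s * |z|)) P) {Z : ℂ → ℂ} (hZ : ContinuousAt Z 0)
    (hZ0 : Z 0 ≠ 0) (hfactor : ∀ u, laplaceTransform P u = 1 + u ^ 2 * Z u) :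
    ∃ ρ > 0, ∀ u : ℂ, |u.re| < ρ → Z u ≠ 0 := by
  obtain ⟨r, hr, hnear⟩ := Metric.eventually_nhds_iff.1 (hZ.eventually_ne hZ0)
  obtain ⟨ε, hε, hfar⟩ := hP.exists_laplaceTransform_ne_one hs hexp (half_pos hr)
  refine ⟨min ε (r / 2), by positivity, fun u hu hzero ↦ ?_⟩
  obtain ⟨huε, hur⟩ := lt_min_iff.1 hu
  rcases le_or_gt (r / 2) |u.im| with him | him
  · exact hfar u huε him (by simp [hfactor, hzero])
  · refine hnear (y := u) ?_ hzero
    rw [dist_zero_right]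
    linarith [Complex.norm_le_abs_re_add_abs_im u]

end ZeroFreeStrip

section StronglyNonlattice

variable {P : Measure ℝ}

theorem tendsto_charFun_cocompact {f : ℝ → ℝ} (hf : Measurable f) (hf0 : ∀ x, 0 ≤ f x) :
    Tendsto (charFun (volume.withDensity fun x ↦ ENNReal.ofReal (f x))) (cocompact ℝ) (𝓝 0) := by
  have hscale : -(2 * π)⁻¹ ≠ 0 := by simp [pi_ne_zero]
  refine ((Real.tendsto_integral_exp_smul_cocompact fun x ↦ (f x : ℂ)).comp
    (Homeomorph.mulRight₀ _ hscale).isClosedEmbedding.tendsto_cocompact).congr fun t ↦ ?_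
  rw [charFun_apply_real, integral_withDensity_eq_integral_toReal_smul (by fun_prop)
    (ae_of_all _ fun x ↦ ENNReal.ofReal_lt_top)]
  refine integral_congr_ae (ae_of_all _ fun x ↦ ?_)
  have hpi : (π : ℂ) ≠ 0 := by exact_mod_cast pi_ne_zero
  simp only [Homeomorph.coe_mulRight₀, ENNReal.toReal_ofReal (hf0 x), Circle.smul_def,
    Real.fourierChar_apply, smul_eq_mul, Complex.real_smul, mul_comm (Complex.exp _)]
  congr 2
  push_cast
  field_simp

theorem charFun_ne_one [IsProbabilityMeasure P] [NullSingletonClass P] {t : ℝ} (ht : t ≠ 0) :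
    charFun P t ≠ 1 := by
  intro hone
  have hcos_integrable : Integrable (fun x ↦ cos (t * x)) P :=
    .of_bound (by fun_prop) 1 (ae_of_all _ fun x ↦ abs_cos_le_one _)
  have hcos : ∫ x, cos (t * x) ∂P = 1 := by
    have hint : Integrable (fun x : ℝ ↦ Complex.exp (t * x * Complex.I)) P :=
      .of_bound (by fun_prop) 1 (ae_of_all _ fun x ↦ by simp [Complex.norm_exp])
    have hre := integral_re (𝕜 := ℂ) hint
    rw [← charFun_apply_real, hone] at hre
    simpa [Complex.exp_re] using hre
  have hdefect : ∫ x, (1 - cos (t * x)) ∂P = 0 := by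
    rw [integral_sub (integrable_const _) hcos_integrable, hcos]
    simp
  rw [integral_eq_zero_iff_of_nonneg (fun x ↦ sub_nonneg.2 (cos_le_one _))
    ((integrable_const _).sub hcos_integrable)] at hdefect
  have hlattice : ∀ᵐ x ∂P, x ∈ range fun n : ℤ ↦ n * (2 * π) / t := by
    filter_upwards [hdefect] with x hx
    obtain ⟨n, hn⟩ := (cos_eq_one_iff _).1 (sub_eq_zero.1 hx).symm
    exact ⟨n, by simp only [hn, mul_div_cancel_left₀ _ ht]⟩
  have hnull : P (range fun n : ℤ ↦ n * (2 * π) / t) = 0 := (countable_range _).measure_zero P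
  obtain ⟨x, hx, hx'⟩ := (hlattice.and (measure_eq_zero_iff_ae_notMem.1 hnull)).exists
  exact hx' hx

theorem stronglyNonlattice_of_tendsto_charFun [IsProbabilityMeasure P]
    (hlim : Tendsto (charFun P) (cocompact ℝ) (𝓝 0)) (hne : ∀ t ≠ 0, charFun P t ≠ 1) :
    StronglyNonlattice P := by
  intro r hr
  have hcont : Continuous fun t ↦ ‖charFun P t - 1‖ := by fun_prop
  have hlim' : Tendsto (fun t ↦ ‖charFun P t - 1‖) (cocompact ℝ) (𝓝 1) := by
    simpa using (hlim.sub_const 1).norm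
  obtain ⟨K, hK, hfar⟩ := mem_cocompact.1
    (hlim'.eventually_const_le (show (1 / 2 : ℝ) < 1 by norm_num))
  have hcompact : IsCompact (K ∩ {t | r ≤ |t|}) :=
    hK.inter_right (isClosed_le continuous_const continuous_abs)
  obtain ⟨η, hη, hnear⟩ := hcompact.exists_forall_le' hcont.continuousOn fun t ht ↦
    norm_pos_iff.2 (sub_ne_zero.2 (hne t (abs_pos.1 (hr.trans_le ht.2))))
  refine ⟨min η (1 / 2), by positivity, fun t ht ↦ ?_⟩
  by_cases htK : t ∈ K
  · exact (min_le_left _ _).trans (hnear t ⟨htK, ht⟩)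
  · exact (min_le_right _ _).trans (hfar htK)

end StronglyNonlattice

section FosterLyapunov

/-- The bounded Lyapunov function of the drift argument: `e^{-ut} - e^{-st} - e^{-uN}`, truncated
at zero. The first correction removes the growth at `-∞`, the second one the mass at `+∞`. -/
noncomputable def lyapunovFun (u s N t : ℝ) : ℝ :=
  max 0 (exp (-(u * t)) - exp (-(s * t)) - exp (-(u * N)))

variable {P ν : Measure ℝ} {h : ℝ → ℝ} {u s N : ℝ}

theorem lyapunovFun_nonneg (u s N t : ℝ) : 0 ≤ lyapunovFun u s N t :=
  le_max_left _ _

@[fun_prop]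
theorem continuous_lyapunovFun (u s N : ℝ) : Continuous (lyapunovFun u s N) := by
  unfold lyapunovFun
  fun_prop

theorem lyapunovFun_eq_zero_of_le (hu : 0 ≤ u) {t : ℝ} (ht : N ≤ t) : lyapunovFun u s N t = 0 := by
  have hle : exp (-(u * t)) ≤ exp (-(u * N)) := exp_le_exp.2 (by gcongr)
  exact max_eq_left (by linarith [exp_pos (-(s * t))])

theorem lyapunovFun_le_one (hu : 0 ≤ u) (hus : u ≤ s) (t : ℝ) : lyapunovFun u s N t ≤ 1 := by
  refine max_le zero_le_one ?_
  rcases le_total 0 t with ht | ht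
  · have : exp (-(u * t)) ≤ 1 := exp_le_one_iff.2 (by simpa using mul_nonneg hu ht)
    linarith [exp_pos (-(s * t)), exp_pos (-(u * N))]
  · have : exp (-(u * t)) ≤ exp (-(s * t)) :=
      exp_le_exp.2 (neg_le_neg (mul_le_mul_of_nonpos_right hus ht))
    linarith [exp_pos (-(u * N))]

theorem lintegral_lyapunovFun_lt_top (hu : 0 ≤ u) (hus : u ≤ s) (hν : ν (Iio N) < ⊤) :
    ∫⁻ y, ENNReal.ofReal (lyapunovFun u s N y) ∂ν < ⊤ := by
  refine lt_of_le_of_lt (lintegral_mono (g := (Iio N).indicator 1) fun y ↦ ?_)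
    (by rwa [lintegral_indicator_one measurableSet_Iio])
  rcases lt_or_ge y N with hy | hy
  · simpa [hy] using lyapunovFun_le_one hu hus y
  · simp [lyapunovFun_eq_zero_of_le hu hy]

theorem integrable_lyapunovFun_const_add [IsFiniteMeasure P] (hu : 0 ≤ u) (hus : u ≤ s) (w : ℝ) :
    Integrable (fun z ↦ lyapunovFun u s N (w + z)) P :=
  .of_bound (by fun_prop) 1 <| ae_of_all _ fun z ↦ by
    rw [norm_of_nonneg (lyapunovFun_nonneg ..)]
    exact lyapunovFun_le_one hu hus _

theorem le_integral_lyapunovFun [IsProbabilityMeasure P] (hu : 0 ≤ u) (hus : u ≤ s)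
    (hPu : Integrable (fun z ↦ exp (-(u * z))) P) (hPs : Integrable (fun z ↦ exp (-(s * z))) P)
    (w : ℝ) :
    (∫ z, exp (-(u * z)) ∂P) * exp (-(u * w)) - (∫ z, exp (-(s * z)) ∂P) * exp (-(s * w)) -
      exp (-(u * N)) ≤ ∫ z, lyapunovFun u s N (w + z) ∂P := by
  have hsplit (a z : ℝ) : exp (-(a * z)) * exp (-(a * w)) = exp (-(a * (w + z))) := by
    rw [← exp_add]
    ring_nf
  have hPu' := hPu.mul_const (exp (-(u * w)))
  have hPs' := hPs.mul_const (exp (-(s * w)))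
  rw [← integral_mul_const, ← integral_mul_const, ← integral_sub hPu' hPs']
  simp only [hsplit] at hPu' hPs' ⊢
  have hsub : Integrable (fun z ↦ exp (-(u * (w + z))) - exp (-(s * (w + z)))) P := hPu'.sub hPs'
  calc _ = ∫ z, (exp (-(u * (w + z))) - exp (-(s * (w + z))) - exp (-(u * N))) ∂P := by
        rw [integral_sub hsub (integrable_const _), integral_const, probReal_univ, one_smul]
    _ ≤ _ := integral_mono (hsub.sub (integrable_const _))
        (integrable_lyapunovFun_const_add hu hus w) fun z ↦ le_max_right _ _

theorem eventually_drift_le (hlim : Tendsto (fun y ↦ h y - y) atTop (𝓝 0)) (hus : u < s)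
    {A B c : ℝ} (hA : c + 1 < A) :
    ∀ᶠ y in atTop,
      B * exp (-(s * h y)) + c * exp (-(u * h y)) + exp (-(u * y)) ≤ A * exp (-(u * h y)) := by
  have htop : Tendsto h atTop atTop := by
    simpa using hlim.add_atTop tendsto_id
  have hdecay : Tendsto (fun y ↦ exp (-((s - u) * h y))) atTop (𝓝 0) :=
    tendsto_exp_neg_atTop_nhds_zero.comp (htop.const_mul_atTop (sub_pos.2 hus))
  have hjump : Tendsto (fun y ↦ exp (u * (h y - y))) atTop (𝓝 1) := by
    simpa using (hlim.const_mul u).rexp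
  have hsum : Tendsto (fun y ↦ B * exp (-((s - u) * h y)) + c + exp (u * (h y - y))) atTop
      (𝓝 (c + 1)) := by
    simpa using ((hdecay.const_mul B).add_const c).add hjump
  filter_upwards [hsum.eventually_le_const hA] with y hy
  calc B * exp (-(s * h y)) + c * exp (-(u * h y)) + exp (-(u * y))
      = (B * exp (-((s - u) * h y)) + c + exp (u * (h y - y))) * exp (-(u * h y)) := by
        rw [add_mul, add_mul, mul_assoc B, ← exp_add, ← exp_add]
        ring_nf
    _ ≤ A * exp (-(u * h y)) := by gcongr

theorem lyapunovFun_add_indicator_le [IsProbabilityMeasure P] (hu : 0 ≤ u) (hus : u ≤ s)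
    (hPu : Integrable (fun z ↦ exp (-(u * z))) P) (hPs : Integrable (fun z ↦ exp (-(s * z))) P)
    {c R : ℝ} (hc : 0 ≤ c)
    (hdrift : ∀ y > R, (∫ z, exp (-(s * z)) ∂P) * exp (-(s * h y)) + c * exp (-(u * h y)) +
      exp (-(u * y)) ≤ (∫ z, exp (-(u * z)) ∂P) * exp (-(u * h y))) (y : ℝ) :
    ENNReal.ofReal (lyapunovFun u s N y) +
        (Ioo R N).indicator (fun y ↦ ENNReal.ofReal (c * exp (-(u * h y)))) y ≤
      ∫⁻ z, ENNReal.ofReal (lyapunovFun u s N (h y + z)) ∂P + (Iic R).indicator 1 y := by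
  rcases le_or_gt y R with hyR | hyR
  · simpa [hyR.not_gt, hyR] using
      (ENNReal.ofReal_le_one.2 (lyapunovFun_le_one hu hus y)).trans le_add_self
  rcases le_or_gt N y with hyN | hyN
  · simp [hyN.not_gt, hyR.not_ge, lyapunovFun_eq_zero_of_le hu hyN]
  have hmean := le_integral_lyapunovFun (N := N) hu hus hPu hPs (h y)
  have hcut : exp (-(u * N)) ≤ exp (-(u * y)) := exp_le_exp.2 (by gcongr)
  have hle : lyapunovFun u s N y + c * exp (-(u * h y)) ≤
      ∫ z, lyapunovFun u s N (h y + z) ∂P := by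
    rw [lyapunovFun, max_add, max_le_iff]
    constructor <;> linarith [hdrift y hyR, exp_pos (-(s * y))]
  rw [indicator_of_mem (mem_Ioo.2 ⟨hyR, hyN⟩), indicator_of_notMem (by simpa using hyR), add_zero,
    ← ofReal_integral_eq_lintegral_ofReal (integrable_lyapunovFun_const_add hu hus _)
      (ae_of_all _ fun z ↦ lyapunovFun_nonneg ..),
    ← ENNReal.ofReal_add (lyapunovFun_nonneg ..) (by positivity)]
  exact ENNReal.ofReal_le_ofReal hle

theorem lintegral_eq_of_map_conv_eq [SFinite P] (hh : Measurable h) (hinv : ν.map h ∗ P = ν)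
    {f : ℝ → ℝ≥0∞} (hf : Measurable f) :
    ∫⁻ y, f y ∂ν = ∫⁻ y, ∫⁻ z, f (h y + z) ∂P ∂ν := by
  conv_lhs => rw [← hinv]
  rw [Measure.lintegral_conv hf, lintegral_map (by fun_prop) hh]

theorem setLIntegral_exp_neg_mul_le_of_drift [IsProbabilityMeasure P]
    (hh : Measurable h) (hinv : ν.map h ∗ P = ν) (hν : ∀ x, ν (Iic x) < ⊤) (hu : 0 ≤ u)
    (hus : u ≤ s) (hPu : Integrable (fun z ↦ exp (-(u * z))) P)
    (hPs : Integrable (fun z ↦ exp (-(s * z))) P) {c R : ℝ} (hc : 0 ≤ c)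
    (hdrift : ∀ y > R, (∫ z, exp (-(s * z)) ∂P) * exp (-(s * h y)) + c * exp (-(u * h y)) +
      exp (-(u * y)) ≤ (∫ z, exp (-(u * z)) ∂P) * exp (-(u * h y))) :
    ∫⁻ y in Ioi R, ENNReal.ofReal (c * exp (-(u * h y))) ∂ν ≤ ν (Iic R) := by
  have hcutoff (N : ℝ) :
      ∫⁻ y in Ioo R N, ENNReal.ofReal (c * exp (-(u * h y))) ∂ν ≤ ν (Iic R) := by
    have hle := lintegral_mono (μ := ν)
      (lyapunovFun_add_indicator_le (N := N) hu hus hPu hPs hc hdrift)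
    rw [lintegral_add_left (by fun_prop), lintegral_add_right _ (by measurability),
      lintegral_indicator measurableSet_Ioo, lintegral_indicator_one measurableSet_Iic,
      ← lintegral_eq_of_map_conv_eq hh hinv (f := fun y ↦ ENNReal.ofReal (lyapunovFun u s N y))
        (by fun_prop)] at hle
    exact (ENNReal.add_le_add_iff_left (lintegral_lyapunovFun_lt_top hu hus
      ((measure_mono Iio_subset_Iic_self).trans_lt (hν N))).ne).1 hle
  refine le_of_tendsto ((aecover_Iio tendsto_id).lintegral_tendsto_of_countably_generated
    (f := fun y ↦ ENNReal.ofReal (c * exp (-(u * h y)))) (by fun_prop))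
    (Eventually.of_forall fun N ↦ ?_)
  rw [Measure.restrict_restrict measurableSet_Iio, inter_comm, Ioi_inter_Iio]
  exact hcutoff N

theorem integrable_exp_neg_mul_of_one_lt_integral [IsProbabilityMeasure P]
    (hh : Measurable h) (hnonneg : ∀ y, 0 ≤ h y)
    (hlim : Tendsto (fun y ↦ h y - y) atTop (𝓝 0)) (hinv : ν.map h ∗ P = ν)
    (hν : ∀ x, ν (Iic x) < ⊤) (hu : 0 ≤ u) (hus : u < s)
    (hPu : Integrable (fun z ↦ exp (-(u * z))) P) (hPs : Integrable (fun z ↦ exp (-(s * z))) P)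
    (hgt : 1 < ∫ z, exp (-(u * z)) ∂P) : Integrable (fun y ↦ exp (-(u * h y))) ν := by
  obtain ⟨c, hc, hcP⟩ : ∃ c > 0, c + 1 < ∫ z, exp (-(u * z)) ∂P :=
    ⟨((∫ z, exp (-(u * z)) ∂P) - 1) / 2, by linarith, by linarith⟩
  obtain ⟨R, hR⟩ := eventually_atTop.1
    (eventually_drift_le hlim hus (B := ∫ z, exp (-(s * z)) ∂P) hcP)
  have hleft : IntegrableOn (fun y ↦ exp (-(u * h y))) (Iic R) ν := by
    refine IntegrableOn.of_bound (hν R) (by fun_prop) 1 (ae_of_all _ fun y ↦ ?_)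
    rw [norm_of_nonneg (exp_pos _).le]
    exact exp_le_one_iff.2 (by simpa using mul_nonneg hu (hnonneg y))
  have hright : IntegrableOn (fun y ↦ c * exp (-(u * h y))) (Ioi R) ν := by
    refine ⟨by fun_prop, (hasFiniteIntegral_iff_ofReal (ae_of_all _ fun y ↦ by positivity)).2 ?_⟩
    exact (setLIntegral_exp_neg_mul_le_of_drift hh hinv hν hu hus.le hPu hPs hc.le
      fun y hy ↦ hR y hy.le).trans_lt (hν R)
  rw [← integrableOn_univ, ← Iic_union_Ioi (a := R)]
  exact hleft.union ((integrable_const_mul_iff (IsUnit.mk0 c hc.ne') _).1 hright)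

theorem one_lt_integral_exp_neg_mul [IsProbabilityMeasure P] (hP : ¬∀ᵐ z ∂P, z = 0)
    (hid : Integrable (fun z ↦ z) P) (hmean : ∫ z, z ∂P = 0) (hu : u ≠ 0)
    (hPu : Integrable (fun z ↦ exp (-(u * z))) P) : 1 < ∫ z, exp (-(u * z)) ∂P := by
  have hlin : Integrable (fun z ↦ 1 - u * z) P := (integrable_const _).sub (hid.const_mul _)
  have hlin_integral : ∫ z, (1 - u * z) ∂P = 1 := by
    rw [integral_sub (integrable_const _) (hid.const_mul _), integral_const_mul, hmean]
    simp
  have hnonneg (z : ℝ) : 0 ≤ exp (-(u * z)) - (1 - u * z) := by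
    linarith [add_one_le_exp (-(u * z))]
  have hpos : 0 < ∫ z, (exp (-(u * z)) - (1 - u * z)) ∂P := by
    refine (integral_nonneg hnonneg).lt_of_ne' fun hzero ↦ hP ?_
    filter_upwards [(integral_eq_zero_iff_of_nonneg hnonneg (hPu.sub hlin)).1 hzero] with z hz
    by_contra hz0
    have hlt := add_one_lt_exp (neg_ne_zero.2 (mul_ne_zero hu hz0))
    simp only [Pi.zero_apply] at hz
    linarith
  rw [integral_sub hPu hlin, hlin_integral] at hpos
  linarith

theorem integrable_exp_neg_mul_of_map_conv_eq [IsProbabilityMeasure P]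
    (hh : Measurable h) (hnonneg : ∀ y, 0 ≤ h y)
    (hlim : Tendsto (fun y ↦ h y - y) atTop (𝓝 0)) (hinv : ν.map h ∗ P = ν)
    (hν : ∀ x, ν (Iic x) < ⊤) (hs : 0 < s) (hexp : Integrable (fun z ↦ exp (s * |z|)) P)
    (hP : ¬∀ᵐ z ∂P, z = 0) (hmean : ∫ z, z ∂P = 0) (hu : 0 < u) :
    Integrable (fun y ↦ exp (-(u * h y))) ν := by
  set v := min u (s / 2)
  have hv0 : 0 < v := by positivity
  have hvs : v < s := (min_le_right _ _).trans_lt (by linarith)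
  have hPv := integrable_exp_neg_mul_of_integrable_exp_mul_abs hexp (t := v)
    (by rw [abs_of_pos hv0]; exact hvs.le)
  have hPs := integrable_exp_neg_mul_of_integrable_exp_mul_abs hexp (abs_of_pos hs).le
  have hid : Integrable (fun z : ℝ ↦ z) P := by
    simpa using integrable_pow_of_integrable_exp_mul_abs hs hexp 1
  have hsmall := integrable_exp_neg_mul_of_one_lt_integral hh hnonneg hlim hinv hν hv0.le hvs
    hPv hPs (one_lt_integral_exp_neg_mul hP hid hmean hv0.ne' hPv)
  refine hsmall.mono' (by fun_prop) (ae_of_all _ fun y ↦ ?_)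
  rw [norm_of_nonneg (exp_pos _).le, exp_le_exp, neg_le_neg_iff]
  exact mul_le_mul_of_nonneg_right (min_le_left _ _) (hnonneg y)

end FosterLyapunov

section ParametricIntegral

variable {α : Type*} [TopologicalSpace α] [MeasurableSpace α] [OpensMeasurableSpace α]
  {μ : Measure α} {F : α → ℂ → ℂ} {b : α → ℝ} {U : Set ℂ} {u : ℂ}

theorem integrable_deriv_and_hasDerivAt_integral_of_norm_le (hU : U ∈ 𝓝 u)
    (hcont : Continuous (Function.uncurry F)) (hdiff : ∀ y, Differentiable ℂ (F y))
    (hb : Integrable b μ) (hbound : ∀ y, ∀ v ∈ U, ‖F y v‖ ≤ b y) :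
    Integrable (fun y ↦ deriv (F y) u) μ ∧
      HasDerivAt (fun v ↦ ∫ y, F y v ∂μ) (∫ y, deriv (F y) u ∂μ) u := by
  obtain ⟨r, hr, hball⟩ := Metric.mem_nhds_iff.1 hU
  have hmeas (v : ℂ) : AEStronglyMeasurable (fun y ↦ F y v) μ :=
    (hcont.comp (by fun_prop : Continuous fun y : α ↦ (y, v))).aestronglyMeasurable
  have hmeas' : AEStronglyMeasurable (fun y ↦ deriv (F y) u) μ :=
    ((measurable_deriv_with_param hcont).comp
      (by fun_prop : Measurable fun y : α ↦ (y, u))).aestronglyMeasurable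
  have hderiv_le (y : α) (v : ℂ) (hv : v ∈ Metric.ball u (r / 2)) :
      ‖deriv (F y) v‖ ≤ b y / (r / 2) := by
    refine Complex.norm_deriv_le_of_forall_mem_sphere_norm_le (half_pos hr)
      (hdiff y).diffContOnCl fun z hz ↦ hbound y z (hball ?_)
    rw [Metric.mem_ball] at hv ⊢
    linarith [dist_triangle z v u, Metric.mem_sphere.1 hz]
  exact hasDerivAt_integral_of_dominated_loc_of_deriv_le (F := fun v y ↦ F y v)
    (Metric.ball_mem_nhds u (half_pos hr)) (Eventually.of_forall hmeas)
    (hb.mono' (hmeas u) (ae_of_all _ fun y ↦ hbound y u (mem_of_mem_nhds hU))) hmeas'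
    (ae_of_all _ hderiv_le) (hb.div_const _)
    (ae_of_all _ fun y v _ ↦ (hdiff y v).hasDerivAt)

end ParametricIntegral

section LaplaceDefect

/-- The increment `∫ (e^{-uy} - e^{-u h(y)}) ν(dy)` of the Laplace transform in one deterministic
step of the chain. The integrand is small at `+∞` even where neither term is integrable, so that
this function is defined on both sides of the imaginary axis. -/
noncomputable def laplaceDefect (ν : Measure ℝ) (u : ℂ) : ℂ :=
  ∫ y : ℝ, (Complex.exp (-(u * y)) - Complex.exp (-(u * hY y))) ∂ν

variable {P ν : Measure ℝ} {s : ℝ} {u : ℂ}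

theorem norm_cexp_neg_mul_sub_cexp_hY_le_of_nonpos (hs : s ≤ 1) (hu : |u.re| ≤ s) {y : ℝ}
    (hy : y ≤ 0) :
    ‖Complex.exp (-(u * y)) - Complex.exp (-(u * hY y))‖ ≤ (1 + exp 1) * exp (-(s * y)) := by
  obtain ⟨hsu, hus⟩ := abs_le.1 hu
  have hs0 : 0 ≤ s := (abs_nonneg _).trans hu
  have hone : 1 ≤ exp (-(s * y)) :=
    one_le_exp (neg_nonneg.2 (mul_nonpos_of_nonneg_of_nonpos hs0 hy))
  have hjump : -(u.re * hY y) ≤ 1 := by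
    have : hY y ≤ 1 := (hY_le_exp y).trans (exp_le_one_iff.2 hy)
    nlinarith [hY_pos y]
  calc ‖Complex.exp (-(u * y)) - Complex.exp (-(u * hY y))‖
      ≤ exp (-(u.re * y)) + exp (-(u.re * hY y)) := by
        simpa only [norm_cexp_neg_mul_ofReal] using
          norm_sub_le (Complex.exp (-(u * y))) (Complex.exp (-(u * hY y)))
    _ ≤ exp (-(s * y)) + exp 1 := by
        gcongr ?_ + exp ?_
        exact exp_le_exp.2 (by nlinarith)
    _ ≤ (1 + exp 1) * exp (-(s * y)) := by nlinarith [exp_pos 1]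

theorem norm_cexp_neg_mul_sub_cexp_hY_le_of_nonneg (hs : s ≤ 1 / 2) (hu : |u.re| ≤ s) {y : ℝ}
    (hy : 0 ≤ y) :
    ‖Complex.exp (-(u * y)) - Complex.exp (-(u * hY y))‖ ≤
      ‖u‖ * exp ‖u‖ * exp (-(s * y)) := by
  obtain ⟨hsu, -⟩ := abs_le.1 hu
  have hd0 : 0 ≤ hY y - y := (sub_pos.2 (lt_hY y)).le
  have hd := hY_sub_le_exp_neg y
  have hd1 : hY y - y ≤ 1 := hd.trans (exp_le_one_iff.2 (by linarith))
  have hfactor : Complex.exp (-(u * y)) - Complex.exp (-(u * hY y)) =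
      -(Complex.exp (-(u * y)) * (Complex.exp (-(u * (hY y - y : ℝ))) - 1)) := by
    rw [mul_sub, ← Complex.exp_add, mul_one, neg_sub]
    congr 2
    push_cast
    ring
  have hstep : ‖Complex.exp (-(u * (hY y - y : ℝ))) - 1‖ ≤
      ‖u‖ * (hY y - y) * exp (‖u‖ * (hY y - y)) := by
    simpa [← Complex.ofReal_sub, abs_of_nonneg hd0] using
      Complex.norm_exp_sub_sum_le_norm_mul_exp (-(u * (hY y - y : ℝ))) 1
  calc ‖Complex.exp (-(u * y)) - Complex.exp (-(u * hY y))‖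
      = exp (-(u.re * y)) * ‖Complex.exp (-(u * (hY y - y : ℝ))) - 1‖ := by
        rw [hfactor, norm_neg, norm_mul, norm_cexp_neg_mul_ofReal]
    _ ≤ exp (s * y) * (‖u‖ * exp (-y) * exp (‖u‖ * 1)) := by
        gcongr
        · nlinarith
        · exact hstep.trans (by gcongr)
    _ = ‖u‖ * exp ‖u‖ * exp (s * y - y) := by
        rw [mul_one, sub_eq_add_neg, exp_add]
        ring
    _ ≤ ‖u‖ * exp ‖u‖ * exp (-(s * y)) := by
        gcongr
        nlinarith

theorem norm_cexp_neg_mul_sub_cexp_hY_le (hs : s ≤ 1 / 2) (hu : |u.re| ≤ s) (y : ℝ) :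
    ‖Complex.exp (-(u * y)) - Complex.exp (-(u * hY y))‖ ≤
      (1 + exp 1 + ‖u‖ * exp ‖u‖) * exp (-(s * y)) := by
  rw [add_mul]
  rcases le_total y 0 with hy | hy
  · exact (norm_cexp_neg_mul_sub_cexp_hY_le_of_nonpos (by linarith) hu hy).trans
      (le_add_of_nonneg_right (by positivity))
  · exact (norm_cexp_neg_mul_sub_cexp_hY_le_of_nonneg hs hu hy).trans
      (le_add_of_nonneg_left (by positivity))

theorem deriv_cexp_neg_mul_sub_cexp_hY (y : ℝ) (u : ℂ) :
    deriv (fun v : ℂ ↦ Complex.exp (-(v * y)) - Complex.exp (-(v * hY y))) u =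
      hY y * Complex.exp (-(u * hY y)) - y * Complex.exp (-(u * y)) := by
  have hexp (a : ℂ) : HasDerivAt (fun v : ℂ ↦ Complex.exp (-(v * a)))
      (Complex.exp (-(u * a)) * -(1 * a)) u :=
    ((hasDerivAt_id u).mul_const a).neg.cexp
  refine ((hexp y).sub (hexp (hY y))).deriv.trans ?_
  ring

theorem integrable_and_hasDerivAt_laplaceDefect (hs : s ≤ 1 / 2)
    (hν : Integrable (fun y ↦ exp (-(s * y))) ν) (hu : |u.re| < s) :
    Integrable (fun y : ℝ ↦ hY y * Complex.exp (-(u * hY y)) - y * Complex.exp (-(u * y))) ν ∧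
      HasDerivAt (laplaceDefect ν)
        (∫ y : ℝ, (hY y * Complex.exp (-(u * hY y)) - y * Complex.exp (-(u * y))) ∂ν) u := by
  have hU : {v : ℂ | |v.re| < s} ∩ Metric.ball 0 (‖u‖ + 1) ∈ 𝓝 u :=
    ((isOpen_setOf_abs_re_lt s).inter Metric.isOpen_ball).mem_nhds ⟨hu, by simp⟩
  have hparam := integrable_deriv_and_hasDerivAt_integral_of_norm_le
    (F := fun (y : ℝ) v ↦ Complex.exp (-(v * y)) - Complex.exp (-(v * hY y)))
    (b := fun y ↦ (1 + exp 1 + (‖u‖ + 1) * exp (‖u‖ + 1)) * exp (-(s * y))) hU (by fun_prop)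
    (fun y ↦ by fun_prop) (hν.const_mul _) fun y v hv ↦ by
      refine (norm_cexp_neg_mul_sub_cexp_hY_le hs (le_of_lt hv.1) y).trans ?_
      have hnorm : ‖v‖ ≤ ‖u‖ + 1 := (mem_ball_zero_iff.1 hv.2).le
      gcongr
  simp only [deriv_cexp_neg_mul_sub_cexp_hY] at hparam
  exact hparam

theorem differentiableOn_laplaceDefect (hs : s ≤ 1 / 2)
    (hν : Integrable (fun y ↦ exp (-(s * y))) ν) :
    DifferentiableOn ℂ (laplaceDefect ν) {u | |u.re| < s} := fun _ hu ↦
  (integrable_and_hasDerivAt_laplaceDefect hs hν hu).2.differentiableAt.differentiableWithinAt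

theorem laplaceDefect_zero (ν : Measure ℝ) : laplaceDefect ν 0 = 0 := by
  simp [laplaceDefect]

theorem integrable_hY_sub (hs0 : 0 < s) (hs : s ≤ 1 / 2)
    (hν : Integrable (fun y ↦ exp (-(s * y))) ν) : Integrable (fun y ↦ hY y - y) ν := by
  simpa using (integrable_and_hasDerivAt_laplaceDefect (u := 0) hs hν (by simpa using hs0)).1.re

theorem deriv_laplaceDefect_zero (hs0 : 0 < s) (hs : s ≤ 1 / 2)
    (hν : Integrable (fun y ↦ exp (-(s * y))) ν) :
    deriv (laplaceDefect ν) 0 = (∫ y, (hY y - y) ∂ν : ℝ) := by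
  rw [(integrable_and_hasDerivAt_laplaceDefect hs hν (by simpa using hs0)).2.deriv,
    ← integral_complex_ofReal]
  simp

theorem integral_hY_sub_pos (hν : ν ≠ 0) (hint : Integrable (fun y ↦ hY y - y) ν) :
    0 < ∫ y, (hY y - y) ∂ν := by
  have hpos (y : ℝ) : 0 < hY y - y := sub_pos.2 (lt_hY y)
  rw [integral_pos_iff_support_of_nonneg (fun y ↦ (hpos y).le) hint,
    Function.support_eq_univ fun y ↦ (hpos y).ne']
  exact Measure.measure_univ_pos.2 hν

theorem laplaceDefect_eq_sub_one_mul_laplaceTransform [SFinite ν] [SFinite P]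
    (hinv : ν.map hY ∗ P = ν) (hL : Integrable (fun y ↦ exp (-(u.re * y))) (ν.map hY))
    (hP : Integrable (fun z ↦ exp (-(u.re * z))) P) :
    laplaceDefect ν u = (laplaceTransform P u - 1) * laplaceTransform (ν.map hY) u := by
  have hmap : laplaceTransform (ν.map hY) u = ∫ y, Complex.exp (-(u * hY y)) ∂ν :=
    integral_map (by fun_prop) (by fun_prop)
  have hnext : Integrable (fun y : ℝ ↦ Complex.exp (-(u * hY y))) ν :=
    (integrable_cexp_neg_mul hL).comp_measurable measurable_hY
  have hν := integrable_cexp_neg_mul (integrable_exp_neg_mul_conv hL hP)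
  have hconv := laplaceTransform_conv hL hP
  rw [hinv] at hν hconv
  rw [laplaceDefect, integral_sub hν hnext, ← hmap, ← laplaceTransform, hconv]
  ring

end LaplaceDefect

section SimplePole

theorem exists_differentiableOn_eq_div_add_add_mul {M K : ℂ → ℂ} {ρ : ℝ} (hρ : 0 < ρ)
    (hM : DifferentiableOn ℂ M {u | 0 < u.re}) (hK : DifferentiableOn ℂ K {u | |u.re| < ρ})
    (hMK : ∀ u : ℂ, 0 < u.re → u.re < ρ → u * M u = K u) :
    ∃ H : ℂ → ℂ, DifferentiableOn ℂ H {u | -ρ < u.re} ∧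
      ∀ u : ℂ, 0 < u.re → M u = K 0 / u + deriv K 0 + u * H u := by
  obtain ⟨g, hg, htaylor⟩ := exists_differentiableOn_eq_add_mul_deriv_add_sq_mul
    (setOf_abs_re_lt_mem_nhds_zero hρ) hK
  simp only [sub_zero] at htaylor
  have hne {u : ℂ} (hu : 0 < u.re) : u ≠ 0 := fun h ↦ by simp [h] at hu
  set q : ℂ → ℂ := fun u ↦ (M u - K 0 / u - deriv K 0) / u with hq
  have hqdiff : DifferentiableOn ℂ q {u | 0 < u.re} := fun u hu ↦
    (((hM u hu).sub ((differentiableWithinAt_const _).div differentiableWithinAt_id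
      (hne hu))).sub_const _).div differentiableWithinAt_id (hne hu)
  have hagree (u : ℂ) (hu : 0 < u.re) (huρ : u.re < ρ) : g u = q u := by
    have hu0 := hne hu
    rw [hq, eq_div_iff hu0]
    field_simp
    linear_combination -htaylor u - hMK u hu huρ
  classical
  set H : ℂ → ℂ := {u : ℂ | |u.re| < ρ}.piecewise g q
  have hHg : EqOn H g {u | |u.re| < ρ} := piecewise_eqOn _ _ _
  have hHq : EqOn H q {u | 0 < u.re} := fun u hu ↦ by
    by_cases huρ : |u.re| < ρ
    · exact (hHg huρ).trans (hagree u hu ((le_abs_self _).trans_lt huρ))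
    · exact piecewise_eq_of_notMem _ _ _ huρ
  refine ⟨H, ((hg.congr hHg).union_of_isOpen (hqdiff.congr hHq) (isOpen_setOf_abs_re_lt ρ)
    (isOpen_lt continuous_const (by fun_prop))).mono fun u hu ↦ ?_, fun u hu ↦ ?_⟩
  · exact or_iff_not_imp_right.2 fun hu0 ↦ abs_lt.2 ⟨hu, (not_lt.1 hu0).trans_lt hρ⟩
  · rw [hHq hu, hq, mul_div_cancel₀ _ (hne hu)]
    ring

theorem tendsto_mul_of_eq_div_add_add_mul {M H : ℂ → ℂ} {a c : ℂ} (hH : ContinuousAt H 0)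
    (hM : ∀ u : ℂ, 0 < u.re → M u = a / u + c + u * H u) :
    Tendsto (fun x : ℝ ↦ x * M x) (𝓝[>] 0) (𝓝 a) := by
  have hcont : ContinuousAt (fun u : ℂ ↦ a + u * c + u ^ 2 * H u) 0 := by fun_prop
  have hlim : Tendsto (fun x : ℝ ↦ a + x * c + (x : ℂ) ^ 2 * H x) (𝓝[>] 0) (𝓝 a) := by
    simpa [Function.comp_def] using hcont.tendsto.comp
      ((Complex.continuous_ofReal.tendsto' 0 0 (by simp)).mono_left nhdsWithin_le_nhds)
  refine hlim.congr' ?_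
  filter_upwards [self_mem_nhdsWithin] with x hx
  have hx0 : (x : ℂ) ≠ 0 := by exact_mod_cast (ne_of_gt hx)
  rw [hM x (by simpa using hx)]
  field_simp

theorem im_deriv_eq_zero_of_eventually_im_eq_zero {f : ℂ → ℂ} {f' : ℂ} {a : ℝ}
    (hf : HasDerivAt f f' a) (hreal : ∀ᶠ x : ℝ in 𝓝[≥] a, (f x).im = 0) : f'.im = 0 := by
  have him : HasDerivAt (fun x : ℝ ↦ (f x).im) f'.im a :=
    Complex.imCLM.hasFDerivAt.comp_hasDerivAt a hf.comp_ofReal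
  exact (uniqueDiffWithinAt_Ici a).eq_deriv _ him.hasDerivWithinAt
    ((hasDerivWithinAt_const a _ 0).congr_of_eventuallyEq hreal
      (hreal.self_of_nhdsWithin self_mem_Ici))

theorem measure_univ_eq_top_of_tendsto_mul_laplaceTransform {μ : Measure ℝ} {m : ℂ}
    (hμ : ∀ᵐ x ∂μ, 0 ≤ x) (hm : m ≠ 0)
    (hlim : Tendsto (fun x : ℝ ↦ x * laplaceTransform μ x) (𝓝[>] 0) (𝓝 m)) : μ univ = ⊤ := by
  by_contra hfin
  have : IsFiniteMeasure μ := ⟨lt_top_iff_ne_top.2 hfin⟩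
  refine hm (tendsto_nhds_unique hlim
    (squeeze_zero_norm' (a := fun x : ℝ ↦ |x| * μ.real univ) ?_ ?_))
  · filter_upwards [self_mem_nhdsWithin] with x hx
    have hle : ‖laplaceTransform μ x‖ ≤ 1 * μ.real univ :=
      norm_integral_le_of_norm_le_const (hμ.mono fun y hy ↦ by
        rw [norm_cexp_neg_mul_ofReal, exp_le_one_iff]
        exact neg_nonpos.2 (mul_nonneg (le_of_lt hx) hy))
    rw [norm_mul, Complex.norm_real, norm_eq_abs]
    gcongr
    simpa using hle
  · have hcont : Continuous fun x : ℝ ↦ |x| * μ.real univ := by fun_prop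
    simpa using (hcont.tendsto 0).mono_left nhdsWithin_le_nhds

theorem lintegral_exp_neg_mul_lt_top_iff {μ : Measure ℝ} (hμ : ∀ᵐ x ∂μ, 0 ≤ x)
    (htop : μ univ = ⊤) (hint : ∀ a > 0, Integrable (fun x ↦ exp (-(a * x))) μ) (a : ℝ) :
    ∫⁻ x, ENNReal.ofReal (exp (-a * x)) ∂μ < ⊤ ↔ 0 < a := by
  refine ⟨fun hlt ↦ not_le.1 fun ha ↦ hlt.not_ge ?_, fun ha ↦ ?_⟩
  · rw [← htop, ← lintegral_one]
    refine lintegral_mono_ae (hμ.mono fun x hx ↦ ?_)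
    exact ENNReal.one_le_ofReal.2 (one_le_exp (mul_nonneg (neg_nonneg.2 ha) hx))
  · simpa only [neg_mul] using
      (hasFiniteIntegral_iff_ofReal (ae_of_all _ fun x ↦ (exp_pos _).le)).1 (hint a ha).2

end SimplePole

section InvariantMeasure

variable {P ν : Measure ℝ} {s : ℝ}

theorem exists_mul_laplaceTransform_map_hY_eq [IsProbabilityMeasure P] [SFinite ν]
    (hs0 : 0 < s) (hs : s ≤ 1 / 2) (hexp : Integrable (fun z ↦ exp (s * |z|)) P)
    (hmean : ∫ z, z ∂P = 0) (hP : StronglyNonlattice P) (hinv : ν.map hY ∗ P = ν)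
    (hL : ∀ x > 0, Integrable (fun y ↦ exp (-(x * y))) (ν.map hY))
    (hν : Integrable (fun y ↦ exp (-(s * y))) ν) :
    ∃ ρ > 0, ρ ≤ 1 ∧ ∃ K : ℂ → ℂ, DifferentiableOn ℂ K {u | |u.re| < ρ} ∧
      K 0 = ((2 * ∫ y, (hY y - y) ∂ν) / ∫ z, z ^ 2 ∂P : ℝ) ∧
      ∀ u : ℂ, 0 < u.re → u.re < ρ → u * laplaceTransform (ν.map hY) u = K u := by
  obtain ⟨Z, hZ, hfactor, hZ0⟩ := exists_laplaceTransform_eq_one_add_sq_mul hs0 hexp hmean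
  have hstrip := setOf_abs_re_lt_mem_nhds_zero hs0
  have hvar := integral_sq_pos_of_not_ae_eq_zero hP.not_ae_eq_zero
    (integrable_pow_of_integrable_exp_mul_abs hs0 hexp 2)
  obtain ⟨ρ, hρ, hZne⟩ := hP.exists_strip_ne_zero hs0 hexp (hZ.continuousOn.continuousAt hstrip)
    (by rw [hZ0]; exact_mod_cast (half_pos hvar).ne') hfactor
  have hG := (Complex.differentiableOn_dslope hstrip).2 (differentiableOn_laplaceDefect hs hν)
  refine ⟨min ρ s, by positivity, (min_le_right _ _).trans (by linarith),
    dslope (laplaceDefect ν) 0 / Z, fun u hu ↦ ?_, ?_, fun u hu huρ ↦ ?_⟩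
  · obtain ⟨huρ, hus⟩ := lt_min_iff.1 (show |u.re| < min ρ s from hu)
    have hopen := (isOpen_setOf_abs_re_lt s).mem_nhds hus
    exact ((hG.differentiableAt hopen).div (hZ.differentiableAt hopen)
      (hZne u huρ)).differentiableWithinAt
  · rw [Pi.div_apply, dslope_same, deriv_laplaceDefect_zero hs0 hs hν, hZ0, ← Complex.ofReal_div,
      div_div_eq_mul_div, mul_comm]
  · obtain ⟨huρ, hus⟩ := lt_min_iff.1 huρ
    have hu0 : u ≠ 0 := fun h ↦ by simp [h] at hu
    have hZu := hZne u (by rwa [abs_of_pos hu])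
    have hdefect := laplaceDefect_eq_sub_one_mul_laplaceTransform (u := u) hinv
      (hL u.re hu) (integrable_exp_neg_mul_of_integrable_exp_mul_abs hexp
        (by rw [abs_of_pos hu]; exact hus.le))
    rw [Pi.div_apply, dslope_of_ne _ hu0, slope_def_field, laplaceDefect_zero, hdefect, hfactor]
    field_simp
    ring

theorem exists_laplaceTransform_map_hY_eq [IsProbabilityMeasure P] [SFinite ν]
    (hs0 : 0 < s) (hs : s ≤ 1 / 2) (hexp : Integrable (fun z ↦ exp (s * |z|)) P)
    (hmean : ∫ z, z ∂P = 0) (hP : StronglyNonlattice P) (hinv : ν.map hY ∗ P = ν)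
    (hL : ∀ x > 0, Integrable (fun y ↦ exp (-(x * y))) (ν.map hY))
    (hν : Integrable (fun y ↦ exp (-(s * y))) ν) :
    ∃ c ρ : ℝ, 0 < ρ ∧ ρ ≤ 1 ∧ ∃ H : ℂ → ℂ, DifferentiableOn ℂ H {u | -ρ < u.re} ∧
      ∀ u : ℂ, 0 < u.re → laplaceTransform (ν.map hY) u =
        ((2 * ∫ y, (hY y - y) ∂ν) / ∫ z, z ^ 2 ∂P : ℝ) / u + c + u * H u := by
  obtain ⟨ρ, hρ, hρ1, K, hK, hK0, hLK⟩ :=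
    exists_mul_laplaceTransform_map_hY_eq hs0 hs hexp hmean hP hinv hL hν
  obtain ⟨H, hH, hexpand⟩ := exists_differentiableOn_eq_div_add_add_mul hρ
    (differentiableOn_laplaceTransform_of_integrable_exp_neg_mul hL) hK hLK
  have hreal : ∀ᶠ x : ℝ in 𝓝[≥] 0, (K x).im = 0 := by
    filter_upwards [Ico_mem_nhdsGE hρ] with x hx
    rcases hx.1.eq_or_lt with rfl | hx0
    · rw [Complex.ofReal_zero, hK0, Complex.ofReal_im]
    · rw [← hLK x (by simpa using hx0) (by simpa using hx.2), laplaceTransform_ofReal,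
        ← Complex.ofReal_mul, Complex.ofReal_im]
  have hderiv : ((deriv K 0).re : ℂ) = deriv K 0 :=
    Complex.ext rfl (im_deriv_eq_zero_of_eventually_im_eq_zero
      (by simpa using (hK.differentiableAt (setOf_abs_re_lt_mem_nhds_zero hρ)).hasDerivAt)
      hreal).symm
  exact ⟨(deriv K 0).re, ρ, hρ, hρ1, H, hH, fun u hu ↦ by rw [hexpand u hu, hK0, hderiv]⟩

end InvariantMeasure

section ExponentialTail

variable {P : Measure ℝ} {s δ C : ℝ}

theorem integrable_exp_mul_abs_of_measureReal_le [IsFiniteMeasure P] (hs : 0 < s) (hsδ : s < δ)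
    (htail : ∀ t, 0 ≤ t → P.real {z | t < |z|} ≤ C * exp (-δ * t)) :
    Integrable (fun z ↦ exp (s * |z|)) P := by
  have hlayer : ∫⁻ z, ENNReal.ofReal (∫ t in (0 : ℝ)..|z|, s * exp (s * t)) ∂P =
      ∫⁻ t in Ioi 0, P {z | t < |z|} * ENNReal.ofReal (s * exp (s * t)) :=
    lintegral_comp_eq_lintegral_meas_lt_mul P (ae_of_all _ abs_nonneg) (by fun_prop)
      (fun t _ ↦ Continuous.intervalIntegrable (by fun_prop) _ _)
      (ae_of_all _ fun t ↦ by positivity)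
  have hprimitive (z : ℝ) : ∫ t in (0 : ℝ)..|z|, s * exp (s * t) = exp (s * |z|) - 1 := by
    simp [intervalIntegral.integral_comp_mul_left (fun t ↦ exp t) hs.ne', hs.ne']
  simp only [hprimitive] at hlayer
  have hdecay : IntegrableOn (fun t ↦ C * s * exp (-(δ - s) * t)) (Ioi 0) :=
    (integrableOn_exp_mul_Ioi (by linarith) 0).const_mul _
  have hfinite : ∫⁻ z, ENNReal.ofReal (exp (s * |z|) - 1) ∂P < ⊤ := by
    rw [hlayer]
    refine lt_of_le_of_lt (setLIntegral_mono' measurableSet_Ioi fun t ht ↦ ?_)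
      hdecay.lintegral_lt_top
    calc P {z | t < |z|} * ENNReal.ofReal (s * exp (s * t))
        ≤ ENNReal.ofReal (C * exp (-δ * t)) * ENNReal.ofReal (s * exp (s * t)) := by
          gcongr
          rw [← ofReal_measureReal]
          exact ENNReal.ofReal_le_ofReal (htail t (le_of_lt ht))
      _ = ENNReal.ofReal (C * s * exp (-(δ - s) * t)) := by
          rw [← ENNReal.ofReal_mul' (by positivity), mul_mul_mul_comm, ← exp_add]
          ring_nf
  have hsub : Integrable (fun z ↦ exp (s * |z|) - 1) P :=
    ⟨by fun_prop, (hasFiniteIntegral_iff_ofReal (ae_of_all _ fun z ↦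
      sub_nonneg.2 (one_le_exp (by positivity)))).2 hfinite⟩
  simpa only [Pi.add_def, sub_add_cancel] using hsub.add (integrable_const 1)

end ExponentialTail

section Density

variable {f : ℝ → ℝ}

theorem measureReal_withDensity_ofReal (hf : Integrable f) (hf0 : ∀ x, 0 ≤ f x) {S : Set ℝ}
    (hS : MeasurableSet S) :
    (volume.withDensity fun x ↦ ENNReal.ofReal (f x)).real S = ∫ x in S, f x := by
  rw [measureReal_def, withDensity_apply _ hS, ← ofReal_integral_eq_lintegral_ofReal
    hf.integrableOn (ae_of_all _ hf0), ENNReal.toReal_ofReal (integral_nonneg hf0)]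

theorem isProbabilityMeasure_withDensity_ofReal (hf0 : ∀ x, 0 ≤ f x) (hf1 : ∫ x, f x = 1) :
    IsProbabilityMeasure (volume.withDensity fun x ↦ ENNReal.ofReal (f x)) := by
  have hf : Integrable f := .of_integral_ne_zero (by simp [hf1])
  constructor
  rw [withDensity_apply _ MeasurableSet.univ, setLIntegral_univ,
    ← ofReal_integral_eq_lintegral_ofReal hf (ae_of_all _ hf0), hf1, ENNReal.ofReal_one]

theorem integrable_exp_mul_abs_withDensity_ofReal (hf0 : ∀ x, 0 ≤ f x) (hf1 : ∫ x, f x = 1)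
    {s δ C : ℝ} (hs : 0 < s) (hsδ : s < δ)
    (htail : ∀ t, 0 ≤ t → ∫ x in {x | t < |x|}, f x ≤ C * exp (-δ * t)) :
    Integrable (fun x ↦ exp (s * |x|)) (volume.withDensity fun x ↦ ENNReal.ofReal (f x)) := by
  have := isProbabilityMeasure_withDensity_ofReal hf0 hf1
  refine integrable_exp_mul_abs_of_measureReal_le (C := C) hs hsδ fun t ht ↦ ?_
  rw [measureReal_withDensity_ofReal (.of_integral_ne_zero (by simp [hf1])) hf0
    (measurableSet_lt (by fun_prop) (by fun_prop))]
  exact htail t ht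

theorem stronglyNonlattice_withDensity_ofReal (hf : Measurable f) (hf0 : ∀ x, 0 ≤ f x)
    (hf1 : ∫ x, f x = 1) :
    StronglyNonlattice (volume.withDensity fun x ↦ ENNReal.ofReal (f x)) := by
  have := isProbabilityMeasure_withDensity_ofReal hf0 hf1
  have : NullSingletonClass (volume.withDensity fun x ↦ ENNReal.ofReal (f x)) :=
    ⟨fun x ↦ withDensity_absolutelyContinuous _ _ (measure_singleton x)⟩
  exact stronglyNonlattice_of_tendsto_charFun (tendsto_charFun_cocompact hf hf0)
    fun t ht ↦ charFun_ne_one ht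

theorem integral_id_withDensity_ofReal (hf : Measurable f) (hf0 : ∀ x, 0 ≤ f x) :
    ∫ x, x ∂(volume.withDensity fun x ↦ ENNReal.ofReal (f x)) = ∫ x, x * f x := by
  rw [integral_withDensity_eq_integral_toReal_smul (by fun_prop)
    (ae_of_all _ fun x ↦ ENNReal.ofReal_lt_top)]
  simp only [ENNReal.toReal_ofReal (hf0 _), smul_eq_mul, mul_comm]

theorem IsInvariantY.map_hY_conv_eq {ν : Measure ℝ} (hinv : IsInvariantY f ν)
    (hf : Measurable f) :
    ν.map hY ∗ volume.withDensity (fun x ↦ ENNReal.ofReal (f x)) = ν := by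
  refine Measure.ext_of_lintegral _ fun g hg ↦ ?_
  rw [hinv g hg, Measure.lintegral_conv hg, lintegral_map (by fun_prop) measurable_hY]
  refine lintegral_congr fun y ↦ ?_
  rw [lintegral_withDensity_eq_lintegral_mul _ (by fun_prop) (by fun_prop)]
  simp only [Pi.mul_apply, mul_comm, add_comm]

end Density

theorem stmt9_general {P ν : Measure ℝ} [IsProbabilityMeasure P] [SFinite ν] {s : ℝ} (hs : 0 < s)
    (hexp : Integrable (fun z ↦ exp (s * |z|)) P) (hmean : ∫ z, z ∂P = 0)
    (hP : StronglyNonlattice P) (hinv : ν.map hY ∗ P = ν) (hν : ν ≠ 0)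
    (hfin : ∀ x, ν (Iic x) < ⊤) :
    (∀ u : ℂ, ∫⁻ x, ENNReal.ofReal (exp (-u.re * x)) ∂(ν.map hY) < ⊤ ↔ 0 < u.re) ∧
      ∃ m : ℝ, 0 < m ∧ ∃ c ρ : ℝ, 0 < ρ ∧ ρ ≤ 1 ∧ ∃ H : ℂ → ℂ,
        DifferentiableOn ℂ H {u : ℂ | -ρ < u.re} ∧
        ∀ u : ℂ, 0 < u.re → laplaceTransform (ν.map hY) u = m / u + c + u * H u := by
  have hL (x : ℝ) (hx : 0 < x) : Integrable (fun y ↦ exp (-(x * y))) (ν.map hY) :=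
    (integrable_map_measure (by fun_prop) (by fun_prop)).2 <|
      integrable_exp_neg_mul_of_map_conv_eq measurable_hY (fun y ↦ (hY_pos y).le)
        tendsto_hY_sub_atTop hinv hfin hs hexp hP.not_ae_eq_zero hmean hx
  obtain ⟨σ, hσ, hσ2, hσexp⟩ : ∃ σ > 0, σ ≤ 1 / 2 ∧ Integrable (fun z ↦ exp (σ * |z|)) P :=
    ⟨min s (1 / 2), by positivity, min_le_right _ _,
      integrable_exp_mul_abs_mono hexp (min_le_left _ _)⟩
  have hνσ : Integrable (fun y ↦ exp (-(σ * y))) ν := hinv ▸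
    integrable_exp_neg_mul_conv (hL σ hσ)
      (integrable_exp_neg_mul_of_integrable_exp_mul_abs hσexp (abs_of_pos hσ).le)
  have hgap := integral_hY_sub_pos hν (integrable_hY_sub hσ hσ2 hνσ)
  have hvar := integral_sq_pos_of_not_ae_eq_zero hP.not_ae_eq_zero
    (integrable_pow_of_integrable_exp_mul_abs hs hexp 2)
  obtain ⟨c, ρ, hρ, hρ1, H, hH, hexpand⟩ :=
    exists_laplaceTransform_map_hY_eq hσ hσ2 hσexp hmean hP hinv hL hνσ
  have hm : 0 < (2 * ∫ y, (hY y - y) ∂ν) / ∫ z, z ^ 2 ∂P := by positivity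
  have hnonneg : ∀ᵐ x ∂(ν.map hY), 0 ≤ x :=
    (ae_map_iff (by fun_prop) measurableSet_Ici).2 (ae_of_all _ fun y ↦ (hY_pos y).le)
  have htop : ν.map hY univ = ⊤ :=
    measure_univ_eq_top_of_tendsto_mul_laplaceTransform hnonneg (by exact_mod_cast hm.ne')
      (tendsto_mul_of_eq_div_add_add_mul
        (hH.continuousOn.continuousAt ((isOpen_lt continuous_const (by fun_prop)).mem_nhds
          (by simpa using hρ))) hexpand)
  exact ⟨fun u ↦ lintegral_exp_neg_mul_lt_top_iff hnonneg htop hL u.re,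
    _, hm, c, ρ, hρ, hρ1, H, hH, hexpand⟩

/-- The Laplace transform of the pushforward μ of ν under x ↦ log(1+eˣ) is finite
exactly for Re u > 0 and extends meromorphically with a single simple pole at 0. -/
theorem stmt9
    (ζ : ℝ → ℝ) (hζmeas : Measurable ζ) (hζnn : ∀ x, 0 ≤ ζ x)
    (hζprob : ∫ x, ζ x = 1)
    (hmean : ∫ x, x * ζ x = 0)
    (δ : ℝ) (hδ : 0 < δ) (Cδ : ℝ)
    (htail : ∀ x : ℝ, 0 ≤ x → ∫ y in {y : ℝ | x < |y|}, ζ y ≤ Cδ * Real.exp (-δ * x))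
    (θ : ℝ) (hθ0 : 0 < θ) (hθ1 : θ ≤ 1) (Cθ : ℝ)
    (hHolder : ∀ x y : ℝ, |ζ x - ζ y| ≤ Cθ * |x - y| ^ θ)
    (ν : Measure ℝ) (hν0 : ν ≠ 0) [SigmaFinite ν]
    (hinv : IsInvariantY ζ ν) (hfin : ∀ x : ℝ, ν (Set.Iic x) < ⊤) (hinfty : ν Set.univ = ⊤)
    (x₀ : ℝ)
    (hx₀supp : ∃ ε > 0, ∀ u v : ℝ, x₀ - ε ≤ u → u < v → v ≤ x₀ + ε → 0 < ν (Set.Ioo u v))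
    (hnorm : (ν (Set.Iic x₀)).toReal = 1)
 :
    (∀ u : ℂ,
        (∫⁻ x, ENNReal.ofReal (Real.exp (-u.re * x))
            ∂(Measure.map (fun x => Real.log (1 + Real.exp x)) ν) < ⊤) ↔ 0 < u.re) ∧
      ∃ m : ℝ, 0 < m ∧ ∃ c : ℝ, ∃ ρ : ℝ, 0 < ρ ∧ ρ ≤ 1 ∧ ∃ H : ℂ → ℂ,
        DifferentiableOn ℂ H {u : ℂ | -ρ < u.re} ∧
        ∀ u : ℂ, 0 < u.re →
          ∫ x : ℝ, Complex.exp (-(u * x))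
              ∂(Measure.map (fun x => Real.log (1 + Real.exp x)) ν)
            = (m : ℂ) / u + (c : ℂ) + u * H u := by
  have := isProbabilityMeasure_withDensity_ofReal hζnn hζprob
  simp only [← hY_eq_log_one_add_exp]
  exact stmt9_general (half_pos hδ) (integrable_exp_mul_abs_withDensity_ofReal hζnn hζprob
      (half_pos hδ) (half_lt_self hδ) htail)
    ((integral_id_withDensity_ofReal hζmeas hζnn).trans hmean)
    (stronglyNonlattice_withDensity_ofReal hζmeas hζnn hζprob)
    (hinv.map_hY_conv_eq hζmeas) hν0 hfin
end

section
/- The invariant probability ν_k of the Markov chain X has a cumulative distribution function F_{ν_k}(x) = ν_k((−∞, x]) which is continuously differentiable; in particular ν_k has a continuous density, given by x ↦ ∫_ℝ ζ(x − h_k(y)) ν_k(dy). -/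
open MeasureTheory ProbabilityTheory Real Filter Set
open scoped ENNReal

/-!
The invariance equation writes the distribution function of `ν` as an average over `y` of the
translates `x ↦ F (x - h y)` of `F x = ∫ t in Iic x, ζ t`. As `F' = ζ` is continuous and bounded,
one may differentiate under the integral sign, and the resulting derivative is continuous by
dominated convergence. Boundedness of `ζ` is a consequence of its uniform continuity: a peak of
height `M` forces `‖ζ‖ ≥ M - 1` on a ball whose radius does not depend on the peak, which
integrability rules out for large `M`.
-/

theorem uniformContinuous_of_dist_le_mul_rpow_dist {X Y : Type*} [PseudoMetricSpace X]
    [PseudoMetricSpace Y] {f : X → Y} {C r : ℝ} (hr : 0 < r)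
    (hf : ∀ x y, dist (f x) (f y) ≤ C * dist x y ^ r) : UniformContinuous f := by
  refine tendsto_uniformity_iff_dist_tendsto_zero.2 ?_
  have hdist : Tendsto (fun p : X × X => dist p.1 p.2) (uniformity X) (nhds 0) :=
    tendsto_uniformity_iff_dist_tendsto_zero.1 tendsto_id
  have hbound : Tendsto (fun p : X × X => C * dist p.1 p.2 ^ r) (uniformity X) (nhds 0) := by
    simpa only [Real.zero_rpow hr.ne', mul_zero] using
      (hdist.rpow_const (Or.inr hr.le)).const_mul C
  exact squeeze_zero (fun _ => dist_nonneg) (fun p => hf p.1 p.2) hbound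

theorem enorm_le_lintegral_enorm_div_add {α E : Type*} [MeasurableSpace α]
    [SeminormedAddCommGroup E] {μ : Measure α} {f : α → E} {s : Set α} {v : E} {c : ℝ≥0∞}
    (hs : MeasurableSet s) (hμs : μ s ≠ 0) (hf : ∫⁻ z, ‖f z‖ₑ ∂μ ≠ ∞)
    (hv : ∀ z ∈ s, edist v (f z) ≤ c) : ‖v‖ₑ ≤ (∫⁻ z, ‖f z‖ₑ ∂μ) / μ s + c := by
  have hlower : ∀ z ∈ s, ‖v‖ₑ - c ≤ ‖f z‖ₑ := fun z hz => by
    rw [tsub_le_iff_left, ← edist_zero_right, ← edist_zero_right]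
    exact (edist_triangle v (f z) 0).trans (add_le_add_left (hv z hz) _)
  refine tsub_le_iff_right.1 ((ENNReal.le_div_iff_mul_le (.inl hμs) (.inr hf)).2 ?_)
  calc (‖v‖ₑ - c) * μ s = ∫⁻ _ in s, (‖v‖ₑ - c) ∂μ := (setLIntegral_const _ _).symm
    _ ≤ ∫⁻ z in s, ‖f z‖ₑ ∂μ := setLIntegral_mono' hs hlower
    _ ≤ ∫⁻ z, ‖f z‖ₑ ∂μ := setLIntegral_le_lintegral _ _

theorem exists_forall_norm_le_of_uniformContinuous_of_integrable {G E : Type*}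
    [SeminormedAddCommGroup G] [MeasurableSpace G] [BorelSpace G] [NormedAddCommGroup E]
    {μ : Measure G} [μ.IsAddLeftInvariant] [μ.IsOpenPosMeasure] {f : G → E}
    (huc : UniformContinuous f) (hint : Integrable f μ) : ∃ C, ∀ x, ‖f x‖ ≤ C := by
  obtain ⟨r, hr, hclose⟩ := EMetric.uniformContinuous_iff.1 huc 1 one_pos
  have hpos : μ (Metric.eball 0 r) ≠ 0 := (Metric.measure_eball_pos μ 0 hr.ne').ne'
  have hfin : ∫⁻ z, ‖f z‖ₑ ∂μ ≠ ∞ := hint.hasFiniteIntegral.ne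
  refine ⟨((∫⁻ z, ‖f z‖ₑ ∂μ) / μ (Metric.eball 0 r) + 1).toReal, fun x => ?_⟩
  have hball : μ (Metric.eball x r) = μ (Metric.eball 0 r) := by
    rw [← measure_preimage_add μ x, Metric.preimage_add_left_eball, neg_add_cancel]
  rw [← toReal_enorm, ← hball]
  rw [← hball] at hpos
  exact ENNReal.toReal_mono
    (ENNReal.add_ne_top.2 ⟨ENNReal.div_ne_top hfin hpos, ENNReal.one_ne_top⟩)
    (enorm_le_lintegral_enorm_div_add Metric.isOpen_eball.measurableSet hpos hfin
      fun z hz => (hclose (Metric.mem_eball'.1 hz)).le)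

theorem hasDerivAt_integral_Iic {E : Type*} [NormedAddCommGroup E] [NormedSpace ℝ E]
    [CompleteSpace E] {f : ℝ → E} {a c : ℝ} (hac : a < c) (hf : IntegrableOn f (Iic c))
    (hcont : ContinuousAt f a) : HasDerivAt (fun x => ∫ t in Iic x, f t) (f a) a := by
  have hIic : ∀ {b}, b ≤ c → IntegrableOn f (Iic b) := fun hb => hf.mono_set (Iic_subset_Iic.2 hb)
  have hftc : HasDerivAt (fun x => (∫ t in Iic a, f t) + ∫ t in a..x, f t) (f a) a :=
    (intervalIntegral.integral_hasDerivAt_right IntervalIntegrable.refl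
      ⟨Iic c, Iic_mem_nhds hac, hf.aestronglyMeasurable⟩ hcont).const_add _
  refine hftc.congr_of_eventuallyEq ?_
  filter_upwards [Iic_mem_nhds hac] with x hx
  rw [← intervalIntegral.integral_Iic_sub_Iic (hIic hac.le) (hIic hx), add_sub_cancel]

section Translates

variable {α E : Type*} [MeasurableSpace α] [NormedAddCommGroup E] [NormedSpace ℝ E]
  {μ : Measure α} [IsFiniteMeasure μ] {h : α → ℝ} {C : ℝ}

theorem continuous_integral_comp_sub {f : ℝ → E} (hf : Continuous f) (hC : ∀ a, ‖f a‖ ≤ C)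
    (hh : AEMeasurable h μ) : Continuous fun x => ∫ y, f (x - h y) ∂μ :=
  continuous_of_dominated
    (fun x => hf.comp_aestronglyMeasurable (hh.const_sub x).aestronglyMeasurable)
    (fun _ => ae_of_all _ fun _ => hC _) (integrable_const C)
    (ae_of_all _ fun _ => hf.comp (continuous_sub_right _))

theorem hasDerivAt_integral_comp_sub {F f : ℝ → E} (hF : ∀ a, HasDerivAt F (f a) a)
    (hf : Continuous f) (hC : ∀ a, ‖f a‖ ≤ C) (hh : AEMeasurable h μ) {x : ℝ}
    (hint : Integrable (fun y => F (x - h y)) μ) :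
    HasDerivAt (fun u => ∫ y, F (u - h y) ∂μ) (∫ y, f (x - h y) ∂μ) x := by
  have hFcont : Continuous F := continuous_iff_continuousAt.2 fun a => (hF a).continuousAt
  have hmeas : ∀ {g : ℝ → E}, Continuous g → ∀ u, AEStronglyMeasurable (fun y => g (u - h y)) μ :=
    fun hg u => hg.comp_aestronglyMeasurable (hh.const_sub u).aestronglyMeasurable
  exact (hasDerivAt_integral_of_dominated_loc_of_deriv_le (F' := fun u y => f (u - h y)) univ_mem
    (Eventually.of_forall (hmeas hFcont)) hint (hmeas hf x)
    (ae_of_all _ fun _ _ _ => hC _) (integrable_const C)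
    (ae_of_all _ fun y u _ => (hF (u - h y)).comp_sub_const u (h y))).2

theorem hasDerivAt_integral_integral_Iic_sub [CompleteSpace E] {f : ℝ → E} (hint : Integrable f)
    (hf : Continuous f) (hC : ∀ a, ‖f a‖ ≤ C) (hh : AEMeasurable h μ) (x : ℝ) :
    HasDerivAt (fun u => ∫ y, (∫ t in Iic (u - h y), f t) ∂μ) (∫ y, f (x - h y) ∂μ) x := by
  have hderiv : ∀ a, HasDerivAt (fun b => ∫ t in Iic b, f t) (f a) a := fun a =>
    hasDerivAt_integral_Iic (lt_add_one a) hint.integrableOn hf.continuousAt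
  have hcont : Continuous fun b => ∫ t in Iic b, f t :=
    continuous_iff_continuousAt.2 fun a => (hderiv a).continuousAt
  have hbound : ∀ b, ‖∫ t in Iic b, f t‖ ≤ ∫ t, ‖f t‖ := fun b =>
    (norm_integral_le_integral_norm f).trans
      (setIntegral_le_integral hint.norm (ae_of_all _ fun t => norm_nonneg (f t)))
  refine hasDerivAt_integral_comp_sub hderiv hf hC hh ?_
  exact .of_bound (hcont.comp_aestronglyMeasurable (hh.const_sub x).aestronglyMeasurable) _
    (ae_of_all _ fun y => hbound (x - h y))

end Translates

theorem measurable_hkfun (k : ℝ) : Measurable (hkfun k) := by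
  unfold hkfun
  fun_prop

theorem stmt11_general {ζ : ℝ → ℝ} (hint : Integrable ζ) (hcont : Continuous ζ) {C : ℝ}
    (hC : ∀ x, ‖ζ x‖ ≤ C) {ν : Measure ℝ} [IsFiniteMeasure ν] {h : ℝ → ℝ} (hh : AEMeasurable h ν)
    (hinv : ∀ x : ℝ, (ν (Iic x)).toReal = ∫ y, (∫ t in Iic (x - h y), ζ t) ∂ν) :
    ContDiff ℝ 1 (fun x => (ν (Iic x)).toReal) ∧
      Continuous (fun x => ∫ y, ζ (x - h y) ∂ν) ∧
      ∀ x : ℝ, HasDerivAt (fun t => (ν (Iic t)).toReal) (∫ y, ζ (x - h y) ∂ν) x := by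
  have hdensity : Continuous fun x => ∫ y, ζ (x - h y) ∂ν :=
    continuous_integral_comp_sub hcont hC hh
  have hderiv : ∀ x, HasDerivAt (fun t => (ν (Iic t)).toReal) (∫ y, ζ (x - h y) ∂ν) x := by
    rw [funext hinv]
    exact hasDerivAt_integral_integral_Iic_sub hint hcont hC hh
  refine ⟨contDiff_one_iff_deriv.2 ⟨fun x => (hderiv x).differentiableAt, ?_⟩, hdensity, hderiv⟩
  rwa [deriv_eq hderiv]

/-- The invariant probability ν_k of the chain X has a C¹ cumulative distribution
function, with continuous density x ↦ ∫ ζ(x - h_k(y)) ν_k(dy). -/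
theorem stmt11
    (ζ : ℝ → ℝ) (hζmeas : Measurable ζ) (hζnn : ∀ x, 0 ≤ ζ x)
    (hζprob : ∫ x, ζ x = 1)
    (hmean : ∫ x, x * ζ x = 0)
    (δ : ℝ) (hδ : 0 < δ) (Cδ : ℝ)
    (htail : ∀ x : ℝ, 0 ≤ x → ∫ y in {y : ℝ | x < |y|}, ζ y ≤ Cδ * Real.exp (-δ * x))
    (θ : ℝ) (hθ0 : 0 < θ) (hθ1 : θ ≤ 1) (Cθ : ℝ)
    (hHolder : ∀ x y : ℝ, |ζ x - ζ y| ≤ Cθ * |x - y| ^ θ)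
    (k : ℝ) (hkpos : 0 < k)
    (ν : Measure ℝ) [IsProbabilityMeasure ν]
    (hinv : ∀ x : ℝ, (ν (Set.Iic x)).toReal = ∫ y, (∫ t in Set.Iic (x - hkfun k y), ζ t) ∂ν) :
    ContDiff ℝ 1 (fun x => (ν (Set.Iic x)).toReal) ∧
      Continuous (fun x => ∫ y, ζ (x - hkfun k y) ∂ν) ∧
      ∀ x : ℝ, HasDerivAt (fun t => (ν (Set.Iic t)).toReal) (∫ y, ζ (x - hkfun k y) ∂ν) x := by
  have hint : Integrable ζ := integrable_of_integral_eq_one hζprob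
  have huc : UniformContinuous ζ := uniformContinuous_of_dist_le_mul_rpow_dist hθ0 hHolder
  obtain ⟨C, hC⟩ := exists_forall_norm_le_of_uniformContinuous_of_integrable huc hint
  exact stmt11_general hint huc.continuous hC (measurable_hkfun k).aemeasurable hinv
end
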